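/- (Faithfulness of the open-game semantics on closed-boundary games) Let A : m → (0,0) be an open parity game with no exit positions in which every internal position has at least one outgoing edge, and let i be an entry position of A. Then (∅, i) ∈ ⟦A⟧ if and only if Player 0 has a winning strategy from i, i.e. there is a 0-strategy σ₀ such that for every 1-strategy σ₁, the (necessarily infinite) play from i induced by σ₀ and σ₁ has a maximum infinitely-often-occurring priority which is even. -/

import Mathlib

set_option autoImplicit true

namespace PaperPG

/-! ## Open parity games and their semantics -/

/-- An open parity game of type `m → n`, where `m = (m⁺, m⁻)` and `n = (n⁺, n⁻)`:
entry positions are `Fin (m.1 + n.2)`, exit positions are `Fin (m.2 + n.1)`,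
`V` internal positions with owners, a priority labelling bounded by `M`,
an edge relation with a unique edge out of each entry position and a unique
edge into each exit position. -/
structure OPG (M : ℕ) (m n : ℕ × ℕ) where
  V : ℕ
  owner0 : Fin V → Bool
  E : (Fin (m.1 + n.2) ⊕ Fin V) → (Fin V ⊕ Fin (m.2 + n.1)) → Prop
  prio : Fin V → ℕ
  prio_le : ∀ v, prio v ≤ M
  entry_unique : ∀ i, ∃! t, E (Sum.inl i) t
  exit_unique : ∀ o, ∃! s, E s (Sum.inr o)

namespace OPG

variable {M : ℕ} {m n : ℕ × ℕ}

/-- Entry positions together with internal positions: the possible sources of edges. -/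
abbrev EntryV (A : OPG M m n) := Fin (m.1 + n.2) ⊕ Fin A.V

/-- All positions of an open parity game: entries + internal positions + exits. -/
abbrev Node (A : OPG M m n) := (Fin (m.1 + n.2) ⊕ Fin A.V) ⊕ Fin (m.2 + n.1)

def embed (A : OPG M m n) : (Fin A.V ⊕ Fin (m.2 + n.1)) → A.Node :=
  Sum.map Sum.inr id

/-- A strategy for Player 0 (`pl = true`) or Player 1 (`pl = false`): for every
finite history ending at a position owned by that player it chooses a successor
along an edge (and it must choose one whenever an outgoing edge exists). -/
def Strat (A : OPG M m n) (pl : Bool) :=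
  { σ : List A.EntryV → Option (Fin A.V ⊕ Fin (m.2 + n.1)) //
      ∀ l v, l.getLast? = some (Sum.inr v) → A.owner0 v = pl →
        (∀ t, σ l = some t → A.E (Sum.inr v) t) ∧
        ((∃ t, A.E (Sum.inr v) t) → (σ l).isSome) }

/-- The history (sequence of non-exit positions) of a play up to time `k`. -/
def histList (A : OPG M m n) (p : ℕ → Option A.Node) : ℕ → List A.EntryV
  | 0 => []
  | k + 1 => A.histList p k ++
      (match p k with
        | some (Sum.inl s) => [s]
        | _ => [])

/-- `p` is the play induced by the strategies `σ0` and `σ1` starting at entry `i`. -/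
def IsPlay (A : OPG M m n) (σ0 : A.Strat true) (σ1 : A.Strat false)
    (i : Fin (m.1 + n.2)) (p : ℕ → Option A.Node) : Prop :=
  p 0 = some (Sum.inl (Sum.inl i)) ∧
  ∀ k : ℕ,
    (p k = none → p (k + 1) = none) ∧
    (∀ o : Fin (m.2 + n.1), p k = some (Sum.inr o) → p (k + 1) = none) ∧
    (∀ e : Fin (m.1 + n.2), p k = some (Sum.inl (Sum.inl e)) →
        ∃ t, A.E (Sum.inl e) t ∧ p (k + 1) = some (A.embed t)) ∧
    (∀ v : Fin A.V, p k = some (Sum.inl (Sum.inr v)) →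
        p (k + 1) = Option.map A.embed
          ((if A.owner0 v then σ0.1 else σ1.1) (A.histList p (k + 1))))

/-- Maximum priority encountered along a play up to time `k`. -/
def maxPrioUpTo (A : OPG M m n) (p : ℕ → Option A.Node) (k : ℕ) : ℕ :=
  (Finset.range (k + 1)).sup fun j =>
    match p j with
    | some (Sum.inl (Sum.inr v)) => A.prio v
    | _ => 0

/-- The play `p` is finite, ends at exit position `o`, and the maximum priority
encountered along it is `k`. -/
def EndsAtExit (A : OPG M m n) (p : ℕ → Option A.Node) (o : Fin (m.2 + n.1)) (k : ℕ) : Prop :=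
  ∃ j, p j = some (Sum.inr o) ∧ A.maxPrioUpTo p j = k

/-- Priority `k` occurs infinitely often along `p`. -/
def InfOften (A : OPG M m n) (p : ℕ → Option A.Node) (k : ℕ) : Prop :=
  ∀ N, ∃ j, N ≤ j ∧ ∃ v : Fin A.V, p j = some (Sum.inl (Sum.inr v)) ∧ A.prio v = k

/-- The play is infinite and the maximum priority occurring infinitely often is even:
Player 0 wins the parity condition. -/
def Wins0Inf (A : OPG M m n) (p : ℕ → Option A.Node) : Prop :=
  ∃ k, A.InfOften p k ∧ Even k ∧ ∀ j, A.InfOften p j → j ≤ k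

/-- The play is infinite and the maximum priority occurring infinitely often is odd:
Player 1 wins the parity condition. -/
def Wins1Inf (A : OPG M m n) (p : ℕ → Option A.Node) : Prop :=
  ∃ k, A.InfOften p k ∧ Odd k ∧ ∀ j, A.InfOften p j → j ≤ k

/-- The play ends at a Player-0 position with no available move (a loss for Player 0). -/
def DeadEnd0 (A : OPG M m n) (p : ℕ → Option A.Node) : Prop :=
  ∃ j v, p j = some (Sum.inl (Sum.inr v)) ∧ p (j + 1) = none ∧ A.owner0 v = true

/-- `⟨i, σ0⟩ = lose`: some Player-1 strategy produces a play that is losing for Player 0. -/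
def LosesFrom (A : OPG M m n) (i : Fin (m.1 + n.2)) (σ0 : A.Strat true) : Prop :=
  ∃ (σ1 : A.Strat false) (p : ℕ → Option A.Node),
    A.IsPlay σ0 σ1 i p ∧ (A.Wins1Inf p ∨ A.DeadEnd0 p)

/-- The denotation `⟨i, σ0⟩` (when it is not `lose`): the set of pairs `(o, k)` of an
exit position and a maximal priority realised by some play against a Player-1 strategy. -/
def denot (A : OPG M m n) (i : Fin (m.1 + n.2)) (σ0 : A.Strat true) :
    Set (Fin (m.2 + n.1) × ℕ) :=
  { x | ∃ (σ1 : A.Strat false) (p : ℕ → Option A.Node),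
      A.IsPlay σ0 σ1 i p ∧ A.EndsAtExit p x.1 x.2 }

/-- The semantics `⟦A⟧` of an open parity game: all pairs `(T, i)` with
`T ⊆ exits(A) × ℙ` such that, for some Player-0 strategy `σ0`,
`⟨i,σ0⟩ ≠ lose` and `⟨i,σ0⟩ ⊆ T`. -/
def sem (A : OPG M m n) : Set (Set (Fin (m.2 + n.1) × ℕ) × Fin (m.1 + n.2)) :=
  { Ti | (∀ x ∈ Ti.1, x.2 ≤ M) ∧
      ∃ σ0 : A.Strat true, ¬ A.LosesFrom Ti.2 σ0 ∧ A.denot Ti.2 σ0 ⊆ Ti.1 }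

/-- Equivalence of open parity games: equality of semantics. -/
def equiv (A B : OPG M m n) : Prop := A.sem = B.sem

end OPG

/-!
Membership of `(∅, i)` forbids three outcomes of a play: an infinite play of odd maximum, a dead end
of Player 0, and an exit. When Player 1 is never stuck, these last two are the only ways for a play
to stop, so a play avoiding all three is infinite. Finiteness of the set of positions then gives it
a largest recurring priority, which is not odd. Conversely, a play won by Player 0 visits internal
positions infinitely often, hence never stops, and its largest recurring priority is unique.
-/

namespace OPG

open Filter

section Play

variable {M : ℕ} {m n : ℕ × ℕ} {A : OPG M m n} {p : ℕ → Option A.Node}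

theorem InfOften.le {k : ℕ} (h : A.InfOften p k) : k ≤ M := by
  obtain ⟨_, -, v, -, rfl⟩ := h 0
  exact A.prio_le v

theorem exists_infOften_of_frequently
    (h : ∃ᶠ j in atTop, ∃ v, p j = some (.inl (.inr v))) : ∃ k, A.InfOften p k := by
  obtain ⟨v, hv⟩ := frequently_exists.mp h
  refine ⟨A.prio v, fun N => ?_⟩
  obtain ⟨j, hNj, hj⟩ := frequently_atTop.mp hv N
  exact ⟨j, hNj, v, hj, rfl⟩

theorem exists_isGreatest_infOften (h : ∃ᶠ j in atTop, ∃ v, p j = some (.inl (.inr v))) :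
    ∃ k, IsGreatest {k | A.InfOften p k} k :=
  BddAbove.exists_isGreatest_of_nonempty ⟨M, fun _ => InfOften.le⟩
    (exists_infOften_of_frequently h)

theorem wins0Inf_or_wins1Inf (h : ∃ᶠ j in atTop, ∃ v, p j = some (.inl (.inr v))) :
    A.Wins0Inf p ∨ A.Wins1Inf p := by
  obtain ⟨k, hk, hmax⟩ := exists_isGreatest_infOften h
  exact (Nat.even_or_odd k).imp (fun he => ⟨k, hk, he, hmax⟩) (fun ho => ⟨k, hk, ho, hmax⟩)

theorem Wins0Inf.not_wins1Inf (h₀ : A.Wins0Inf p) : ¬ A.Wins1Inf p := by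
  rintro ⟨l, hl, hodd, hlmax⟩
  obtain ⟨k, hk, heven, hkmax⟩ := h₀
  obtain rfl : k = l := le_antisymm (hlmax k hk) (hkmax l hl)
  exact Nat.not_even_iff_odd.mpr hodd heven

theorem getLast?_histList {k : ℕ} {s : A.EntryV} (h : p k = some (.inl s)) :
    (A.histList p (k + 1)).getLast? = some s := by
  simp only [histList, h, List.getLast?_concat]

end Play

namespace IsPlay

variable {M : ℕ} {m n : ℕ × ℕ} {A : OPG M m n} {σ0 : A.Strat true} {σ1 : A.Strat false}
  {i : Fin (m.1 + n.2)} {p : ℕ → Option A.Node}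

theorem eq_none_of_le (hp : A.IsPlay σ0 σ1 i p) {j k : ℕ} (hj : p j = none) (hjk : j ≤ k) :
    p k = none :=
  Nat.le_induction hj (fun l _ => (hp.2 l).1) k hjk

theorem ne_none_of_wins0Inf (hp : A.IsPlay σ0 σ1 i p) (hw : A.Wins0Inf p) (j : ℕ) :
    p j ≠ none := by
  intro hj
  obtain ⟨_, hk, -, -⟩ := hw
  obtain ⟨l, hjl, v, hv, -⟩ := hk j
  exact Option.some_ne_none _ (hv.symm.trans (hp.eq_none_of_le hj hjl))

theorem ne_exit_of_forall_ne_none (hp : A.IsPlay σ0 σ1 i p) (hinf : ∀ j, p j ≠ none) (j : ℕ)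
    (o : Fin (m.2 + n.1)) : p j ≠ some (.inr o) :=
  fun hj => hinf (j + 1) ((hp.2 j).2.1 o hj)

theorem exists_eq_embed (hp : A.IsPlay σ0 σ1 i p) {k : ℕ} {x : A.Node}
    (hx : p (k + 1) = some x) : ∃ t, A.embed t = x := by
  rcases hk : p k with _ | (e | v) | o
  · simp only [(hp.2 k).1 hk, reduceCtorEq] at hx
  · obtain ⟨t, -, ht⟩ := (hp.2 k).2.2.1 e hk
    exact ⟨t, Option.some.inj (ht.symm.trans hx)⟩
  · rw [(hp.2 k).2.2.2 v hk] at hx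
    obtain ⟨t, -, ht⟩ := Option.map_eq_some_iff.mp hx
    exact ⟨t, ht⟩
  · simp only [(hp.2 k).2.1 o hk, reduceCtorEq] at hx

theorem exists_internal_of_forall_ne_none (hp : A.IsPlay σ0 σ1 i p) (hinf : ∀ j, p j ≠ none)
    (k : ℕ) : ∃ v, p (k + 1) = some (.inl (.inr v)) := by
  obtain ⟨x, hx⟩ := Option.ne_none_iff_exists'.mp (hinf (k + 1))
  obtain ⟨v | o, rfl⟩ := hp.exists_eq_embed hx
  · exact ⟨v, hx⟩
  · exact absurd hx (hp.ne_exit_of_forall_ne_none hinf (k + 1) o)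

theorem ne_none_of_owner1 (hp : A.IsPlay σ0 σ1 i p) {k : ℕ} {v : Fin A.V}
    (hk : p k = some (.inl (.inr v))) (hv : A.owner0 v = false)
    (hmove : ∃ t, A.E (.inr v) t) : p (k + 1) ≠ none := by
  have hchoice : (σ1.1 (A.histList p (k + 1))).isSome :=
    (σ1.2 _ v (getLast?_histList hk) hv).2 hmove
  have hstep := (hp.2 k).2.2.2 v hk
  simp only [hv, Bool.false_eq_true, if_false] at hstep
  rw [hstep]
  exact Option.isSome_iff_ne_none.mp (Option.isSome_map.trans hchoice)

theorem deadEnd0_or_endsAtExit_of_eq_none (hp : A.IsPlay σ0 σ1 i p)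
    (hmove : ∀ v, A.owner0 v = false → ∃ t, A.E (.inr v) t) {k : ℕ} (hk : p k = none) :
    A.DeadEnd0 p ∨ ∃ o l, A.EndsAtExit p o l := by
  induction k with
  | zero => exact absurd (hp.1.symm.trans hk) (Option.some_ne_none _)
  | succ k ih =>
    rcases hprev : p k with _ | (e | v) | o
    · exact ih hprev
    · obtain ⟨t, -, ht⟩ := (hp.2 k).2.2.1 e hprev
      exact absurd (ht.symm.trans hk) (Option.some_ne_none _)
    · cases hv : A.owner0 v with
      | true => exact .inl ⟨k, v, hprev, hk, hv⟩
      | false => exact absurd hk (hp.ne_none_of_owner1 hprev hv (hmove v hv))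
    · exact .inr ⟨o, _, k, hprev, rfl⟩

theorem wins0Inf_iff (hp : A.IsPlay σ0 σ1 i p)
    (hmove : ∀ v, A.owner0 v = false → ∃ t, A.E (.inr v) t) :
    A.Wins0Inf p ↔ ¬ (A.Wins1Inf p ∨ A.DeadEnd0 p) ∧ ∀ o k, ¬ A.EndsAtExit p o k := by
  constructor
  · intro hw
    have hinf := hp.ne_none_of_wins0Inf hw
    refine ⟨not_or.mpr ⟨hw.not_wins1Inf, ?_⟩, ?_⟩
    · rintro ⟨j, -, -, hj, -⟩
      exact hinf (j + 1) hj
    · rintro o - ⟨j, hj, -⟩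
      exact hp.ne_exit_of_forall_ne_none hinf j o hj
  · rintro ⟨hlose, hexit⟩
    obtain ⟨hwins1, hdead⟩ := not_or.mp hlose
    have hinf (j : ℕ) : p j ≠ none := fun hj =>
      (hp.deadEnd0_or_endsAtExit_of_eq_none hmove hj).elim hdead
        fun ⟨o, k, h⟩ => hexit o k h
    have hinternal : ∃ᶠ j in atTop, ∃ v, p j = some (.inl (.inr v)) :=
      frequently_atTop.mpr fun N =>
        ⟨N + 1, N.le_succ, hp.exists_internal_of_forall_ne_none hinf N⟩
    exact (wins0Inf_or_wins1Inf hinternal).resolve_right hwins1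

end IsPlay

theorem empty_mem_sem_iff {M : ℕ} {m n : ℕ × ℕ} {A : OPG M m n} {i : Fin (m.1 + n.2)} :
    (∅, i) ∈ A.sem ↔ ∃ σ0 : A.Strat true, ∀ (σ1 : A.Strat false) (p : ℕ → Option A.Node),
      A.IsPlay σ0 σ1 i p →
        ¬ (A.Wins1Inf p ∨ A.DeadEnd0 p) ∧ ∀ o k, ¬ A.EndsAtExit p o k := by
  constructor
  · rintro ⟨-, σ0, hlose, hdenot⟩
    exact ⟨σ0, fun σ1 p hp =>
      ⟨fun h => hlose ⟨σ1, p, hp, h⟩, fun o k h => hdenot (a := (o, k)) ⟨σ1, p, hp, h⟩⟩⟩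
  · rintro ⟨σ0, hσ0⟩
    exact ⟨fun _ hx => hx.elim, σ0, fun ⟨σ1, p, hp, h⟩ => (hσ0 σ1 p hp).1 h,
      fun (o, k) ⟨σ1, p, hp, h⟩ => (hσ0 σ1 p hp).2 o k h⟩

end OPG

theorem closed_boundary_faithful_general {M : ℕ} {m n : ℕ × ℕ} (A : OPG M m n)
    (hmove : ∀ v, A.owner0 v = false → ∃ t, A.E (.inr v) t) (i : Fin (m.1 + n.2)) :
    (∅, i) ∈ A.sem ↔
      ∃ σ0 : A.Strat true, ∀ (σ1 : A.Strat false) (p : ℕ → Option A.Node),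
        A.IsPlay σ0 σ1 i p → A.Wins0Inf p := by
  rw [OPG.empty_mem_sem_iff]
  exact exists_congr fun σ0 => forall₃_congr fun σ1 p hp => (hp.wins0Inf_iff hmove).symm

/-- **Statement 14** (Faithfulness of the open-game semantics on closed-boundary
games). Let `A : m → (0,0)` be an open parity game with no exit positions in which
every internal position has an outgoing edge, and let `i` be an entry position.
Then `(∅, i) ∈ ⟦A⟧` iff Player 0 has a strategy `σ0` such that, against every
Player-1 strategy, the induced (infinite) play from `i` satisfies the parity
condition for Player 0. -/
theorem closed_boundary_faithful (M : ℕ) (hM : 2 ≤ M) (m : ℕ × ℕ)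
    (A : OPG M m (0, 0)) (hout : ∀ v : Fin A.V, ∃ t, A.E (Sum.inr v) t)
    (i : Fin (m.1 + (0, 0).2)) :
    ((∅ : Set (Fin (m.2 + (0, 0).1) × ℕ)), i) ∈ A.sem ↔
      ∃ σ0 : A.Strat true, ∀ (σ1 : A.Strat false) (p : ℕ → Option A.Node),
        A.IsPlay σ0 σ1 i p → A.Wins0Inf p :=
  closed_boundary_faithful_general A (fun v _ => hout v) i

end PaperPG
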